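/- Fix H with 1/2 < H < 1 and define Φ(s) := ∫₀^s w^{H−3/2}·((1+w)^{H−1/2} − 1) dw for s > 0 (the integral converges). Then: (a) there exist C > 0 such that |Φ(s)| ≤ C·s^{H+1/2} and |Φ'(s)| ≤ C·s^{H−1/2} for all 0 < s ≤ 1; (b) defining Φ⁽⁰⁾ := Φ and Φ⁽ⁿ⁺¹⁾(s) := (1+s)·(d/ds)Φ⁽ⁿ⁾(s) (each Φ⁽ⁿ⁾ is smooth on (0,∞)), for every n ∈ ℕ there exists C(n) > 0 such that |Φ⁽ⁿ⁾(s)| ≤ C(n)·s^{2H−1} for all s ≥ 1. -/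

import Mathlib

open MeasureTheory Set Filter
open scoped ENNReal NNReal Real

noncomputable section

/-- `Φ(s) = ∫₀^s w^{H-3/2}((1+w)^{H-1/2} − 1) dw`. -/
def PhiFn (H s : ℝ) : ℝ :=
  ∫ w in Ioo (0:ℝ) s, w ^ (H - 3/2) * ((1 + w) ^ (H - 1/2) - 1)

/-- The iterates `Φ⁽⁰⁾ = Φ`, `Φ⁽ⁿ⁺¹⁾(s) = (1+s)·(Φ⁽ⁿ⁾)'(s)`. -/
def PhiIter (H : ℝ) : ℕ → ℝ → ℝ
  | 0 => PhiFn H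
  | n + 1 => fun s => (1 + s) * deriv (PhiIter H n) s

/-- Finite combinations of `(1+s)^p s^q` with `0 ≤ p`, `p + q ≤ m`. -/
inductive PhiCls (m : ℝ) : (ℝ → ℝ) → Prop
  | mono (c p q : ℝ) (hp : 0 ≤ p) (hpq : p + q ≤ m) :
      PhiCls m (fun s => c * ((1 + s) ^ p * s ^ q))
  | add (f g : ℝ → ℝ) (hf : PhiCls m f) (hg : PhiCls m g) : PhiCls m (fun s => f s + g s)

lemma PhiCls.contDiffOn {m : ℝ} {g : ℝ → ℝ} (h : PhiCls m g) :
    ContDiffOn ℝ (⊤ : ℕ∞) g (Ioi 0) := by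
  induction h with
  | mono c p q hp hpq =>
    apply contDiffOn_const.mul
    apply ContDiffOn.mul
    · apply ContDiffOn.rpow_const_of_ne
      · exact contDiffOn_const.add contDiffOn_id
      · intro x hx
        have : 0 < x := hx
        positivity
    · apply ContDiffOn.rpow_const_of_ne
      · exact contDiffOn_id
      · intro x hx
        have : 0 < x := hx
        positivity
  | add f g _ _ hf hg => exact hf.add hg

lemma PhiCls.bound {m : ℝ} {g : ℝ → ℝ} (h : PhiCls m g) :
    ∃ C : ℝ, 0 < C ∧ ∀ s : ℝ, 1 ≤ s → |g s| ≤ C * s ^ m := by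
  induction h with
  | mono c p q hp hpq =>
    refine ⟨(|c| + 1) * 2 ^ p, by positivity, fun s hs => ?_⟩
    have hs0 : 0 < s := by linarith
    have e1 : (1 + s) ^ p ≤ 2 ^ p * s ^ p := by
      rw [← Real.mul_rpow (by norm_num) hs0.le]
      exact Real.rpow_le_rpow (by linarith) (by linarith) hp
    have e2 : s ^ p * s ^ q ≤ s ^ m := by
      rw [← Real.rpow_add hs0]
      exact Real.rpow_le_rpow_of_exponent_le hs hpq
    rw [abs_mul, abs_of_nonneg (by positivity : 0 ≤ (1 + s) ^ p * s ^ q), mul_assoc]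
    have e3 : (1 + s) ^ p * s ^ q ≤ 2 ^ p * s ^ m := by
      calc (1 + s) ^ p * s ^ q ≤ 2 ^ p * s ^ p * s ^ q := by gcongr
        _ = 2 ^ p * (s ^ p * s ^ q) := by ring
        _ ≤ _ := by gcongr
    gcongr
    linarith
  | add f g _ _ hf hg =>
    obtain ⟨A, hA, hA2⟩ := hf
    obtain ⟨B, hB, hB2⟩ := hg
    refine ⟨A + B, by positivity, fun s hs => ?_⟩
    have := abs_add_le (f s) (g s)
    have := hA2 s hs
    have := hB2 s hs
    linarith

lemma PhiCls.step {m : ℝ} {g : ℝ → ℝ} (h : PhiCls m g) :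
    ∃ g' : ℝ → ℝ, PhiCls m g' ∧ ∀ s : ℝ, 0 < s → HasDerivAt g (g' s / (1 + s)) s := by
  induction h with
  | mono c p q hp hpq =>
    refine ⟨_, .add _ _ (.mono (c * p) p q hp hpq)
      (.mono (c * q) (p + 1) (q - 1) (by linarith) (by linarith)), fun s hs => ?_⟩
    have hs1 : 0 < 1 + s := by linarith
    have d1 : HasDerivAt (fun s : ℝ => (1 + s) ^ p) (1 * p * (1 + s) ^ (p - 1)) s :=
      ((hasDerivAt_id s).const_add 1).rpow_const (Or.inl hs1.ne')
    have d2 : HasDerivAt (fun s : ℝ => s ^ q) (1 * q * s ^ (q - 1)) s :=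
      (hasDerivAt_id s).rpow_const (Or.inl hs.ne')
    refine ((d1.mul d2).const_mul c).congr_deriv ?_
    rw [Real.rpow_add hs1, Real.rpow_sub hs1, Real.rpow_one]
    field_simp
  | add f g _ _ hf hg =>
    obtain ⟨A, hA, hA2⟩ := hf
    obtain ⟨B, hB, hB2⟩ := hg
    refine ⟨_, .add _ _ hA hB, fun s hs => ?_⟩
    refine ((hA2 s hs).add (hB2 s hs)).congr_deriv ?_
    ring

lemma Phi_integrand_nonneg {H : ℝ} (h1 : 1/2 < H) {w : ℝ} (hw : 0 < w) :
    0 ≤ w ^ (H - 3/2) * ((1 + w) ^ (H - 1/2) - 1) := by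
  have : 1 ≤ (1 + w) ^ (H - 1/2) := Real.one_le_rpow (by linarith) (by linarith)
  have : 0 ≤ (1 + w) ^ (H - 1/2) - 1 := by linarith
  positivity

lemma Phi_integrand_le1 {H : ℝ} (h1 : 1/2 < H) (h2 : H < 1) {w : ℝ} (hw : 0 < w) :
    w ^ (H - 3/2) * ((1 + w) ^ (H - 1/2) - 1) ≤ w ^ (H - 1/2) := by
  have e : (1 + w) ^ (H - 1/2) ≤ 1 + (H - 1/2) * w :=
    rpow_one_add_le_one_add_mul_self (by linarith) (by linarith) (by linarith)
  have e' : (1 + w) ^ (H - 1/2) - 1 ≤ w := by nlinarith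
  have : w ^ (H - 1/2) = w ^ (H - 3/2) * w := by
    rw [← Real.rpow_add_one hw.ne']; congr 1; ring
  rw [this]
  gcongr

lemma Phi_integrand_le2 {H : ℝ} (h1 : 1/2 < H) (h2 : H < 1) {w : ℝ} (hw : 0 < w) :
    w ^ (H - 3/2) * ((1 + w) ^ (H - 1/2) - 1) ≤ w ^ (2 * H - 2) := by
  have e : (1 + w) ^ (H - 1/2) ≤ 1 ^ (H - 1/2) + w ^ (H - 1/2) :=
    Real.rpow_add_le_add_rpow (by linarith) hw.le (by linarith) (by linarith)
  rw [Real.one_rpow] at e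
  have e' : (1 + w) ^ (H - 1/2) - 1 ≤ w ^ (H - 1/2) := by linarith
  have : w ^ (2 * H - 2) = w ^ (H - 3/2) * w ^ (H - 1/2) := by
    rw [← Real.rpow_add hw]; congr 1; ring
  rw [this]
  gcongr

lemma Phi_integrand_contAt {H : ℝ} {w : ℝ} (hw : 0 < w) :
    ContinuousAt (fun w : ℝ => w ^ (H - 3/2) * ((1 + w) ^ (H - 1/2) - 1)) w := by
  apply ContinuousAt.mul
  · exact Real.continuousAt_rpow_const _ _ (Or.inl hw.ne')
  · apply ContinuousAt.sub _ continuousAt_const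
    apply ContinuousAt.rpow_const (by fun_prop)
    left; positivity

lemma rpow_intOn {r s : ℝ} (hr : -1 < r) (hs : 0 < s) :
    IntegrableOn (fun w : ℝ => w ^ r) (Ioo (0:ℝ) s) := by
  have := (intervalIntegral.intervalIntegrable_rpow' (a := 0) (b := s) hr)
  rw [intervalIntegrable_iff_integrableOn_Ioo_of_le hs.le] at this
  exact this

lemma rpow_int {r s : ℝ} (hr : -1 < r) (hs : 0 < s) :
    ∫ w in Ioo (0:ℝ) s, w ^ r = s ^ (r + 1) / (r + 1) := by
  rw [← integral_Ioc_eq_integral_Ioo, ← intervalIntegral.integral_of_le hs.le,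
    integral_rpow (Or.inl hr), Real.zero_rpow (by linarith), sub_zero]

lemma Phi_intOn {H : ℝ} (h1 : 1/2 < H) (h2 : H < 1) {s : ℝ} (hs : 0 < s) :
    IntegrableOn (fun w => w ^ (H - 3/2) * ((1 + w) ^ (H - 1/2) - 1)) (Ioo (0:ℝ) s) := by
  refine Integrable.mono' (rpow_intOn (r := H - 1/2) (by linarith) hs) ?_ ?_
  · apply ContinuousOn.aestronglyMeasurable _ measurableSet_Ioo
    intro w hw
    exact (Phi_integrand_contAt hw.1).continuousWithinAt
  · filter_upwards [ae_restrict_mem measurableSet_Ioo] with w hw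
    rw [Real.norm_of_nonneg (Phi_integrand_nonneg h1 hw.1)]
    exact Phi_integrand_le1 h1 h2 hw.1

lemma Phi_abs_le {H : ℝ} (h1 : 1/2 < H) (h2 : H < 1) {s r : ℝ} (hs : 0 < s) (hr : -1 < r)
    (hle : ∀ w : ℝ, 0 < w → w ^ (H - 3/2) * ((1 + w) ^ (H - 1/2) - 1) ≤ w ^ r) :
    |PhiFn H s| ≤ s ^ (r + 1) / (r + 1) := by
  have h0 : 0 ≤ PhiFn H s :=
    setIntegral_nonneg measurableSet_Ioo fun w hw => Phi_integrand_nonneg h1 hw.1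
  rw [abs_of_nonneg h0, ← rpow_int hr hs]
  exact setIntegral_mono_on (Phi_intOn h1 h2 hs) (rpow_intOn hr hs) measurableSet_Ioo
    fun w hw => hle w hw.1

lemma Phi_hasDerivAt {H : ℝ} (h1 : 1/2 < H) (h2 : H < 1) {s : ℝ} (hs : 0 < s) :
    HasDerivAt (PhiFn H) (s ^ (H - 3/2) * ((1 + s) ^ (H - 1/2) - 1)) s := by
  have key : HasDerivAt (fun u => ∫ w in (0:ℝ)..u, w ^ (H - 3/2) * ((1 + w) ^ (H - 1/2) - 1))
      (s ^ (H - 3/2) * ((1 + s) ^ (H - 1/2) - 1)) s := by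
    apply intervalIntegral.integral_hasDerivAt_right
    · rw [intervalIntegrable_iff_integrableOn_Ioo_of_le hs.le]
      exact Phi_intOn h1 h2 hs
    · apply ContinuousOn.stronglyMeasurableAtFilter isOpen_Ioi (s := Ioi 0) _ s hs
      intro w hw
      exact (Phi_integrand_contAt hw).continuousWithinAt
    · exact Phi_integrand_contAt hs
  apply key.congr_of_eventuallyEq
  filter_upwards [Ioi_mem_nhds hs] with u hu
  rw [intervalIntegral.integral_of_le (le_of_lt hu), integral_Ioc_eq_integral_Ioo]
  rfl

lemma PhiIter_cls {H : ℝ} (h1 : 1/2 < H) (h2 : H < 1) (n : ℕ) :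
    ∃ g, PhiCls (2 * H - 1) g ∧ ∀ s : ℝ, 0 < s → PhiIter H (n + 1) s = g s := by
  induction n with
  | zero =>
    refine ⟨_, .add _ _ (.mono 1 (H + 1/2) (H - 3/2) (by linarith) (by linarith))
      (.mono (-1) 1 (H - 3/2) (by norm_num) (by linarith)), fun s hs => ?_⟩
    have hs1 : 0 < 1 + s := by linarith
    change (1 + s) * deriv (PhiFn H) s = _
    rw [(Phi_hasDerivAt h1 h2 hs).deriv]
    have : (1 + s) ^ (H + 1/2) = (1 + s) ^ (H - 1/2) * (1 + s) := by
      rw [← Real.rpow_add_one hs1.ne']; congr 1; ring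
    rw [this, Real.rpow_one]
    ring
  | succ n ih =>
    obtain ⟨g, hg, hgs⟩ := ih
    obtain ⟨g', hg', hd⟩ := hg.step
    refine ⟨g', hg', fun s hs => ?_⟩
    change (1 + s) * deriv (PhiIter H (n + 1)) s = _
    have : PhiIter H (n + 1) =ᶠ[nhds s] g := by
      filter_upwards [Ioi_mem_nhds hs] with u hu
      exact hgs u hu
    rw [this.deriv_eq, (hd s hs).deriv]
    field_simp

lemma Phi_contDiffOn {H : ℝ} (h1 : 1/2 < H) (h2 : H < 1) :
    ContDiffOn ℝ (⊤ : ℕ∞) (PhiFn H) (Ioi 0) := by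
  rw [contDiffOn_infty_iff_deriv_of_isOpen isOpen_Ioi]
  refine ⟨fun s hs => (Phi_hasDerivAt h1 h2 hs).differentiableAt.differentiableWithinAt, ?_⟩
  have : PhiCls (2 * H - 1) _ := .add _ _
      (.mono 1 (H - 1/2) (H - 3/2) (by linarith) (by linarith))
      (.mono (-1) 0 (H - 3/2) (by norm_num) (by linarith))
  refine this.contDiffOn.congr fun s hs => ?_
  rw [(Phi_hasDerivAt h1 h2 hs).deriv, Real.rpow_zero]
  ring

/-- Estimates for the function `Φ` near `0` and of its iterates `((1+s)∂ₛ)ⁿΦ` at infinity. -/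
theorem PhiFn_estimates (H : ℝ) (h1 : 1/2 < H) (h2 : H < 1) :
    (∀ s : ℝ, 0 < s →
      IntegrableOn (fun w => w ^ (H - 3/2) * ((1 + w) ^ (H - 1/2) - 1)) (Ioo (0:ℝ) s)) ∧
    (∃ C : ℝ, 0 < C ∧ ∀ s : ℝ, 0 < s → s ≤ 1 →
      |PhiFn H s| ≤ C * s ^ (H + 1/2) ∧ |deriv (PhiFn H) s| ≤ C * s ^ (H - 1/2)) ∧
    (∀ n : ℕ, ContDiffOn ℝ (⊤ : ℕ∞) (PhiIter H n) (Ioi 0) ∧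
      ∃ Cn : ℝ, 0 < Cn ∧ ∀ s : ℝ, 1 ≤ s → |PhiIter H n s| ≤ Cn * s ^ (2*H - 1)) := by
  refine ⟨fun s hs => Phi_intOn h1 h2 hs, ⟨1, one_pos, fun s hs hs1 => ⟨?_, ?_⟩⟩, ?_⟩
  · have := Phi_abs_le h1 h2 hs (r := H - 1/2) (by linarith) fun w hw => Phi_integrand_le1 h1 h2 hw
    rw [show H - 1/2 + 1 = H + 1/2 by ring] at this
    rw [one_mul]
    exact this.trans (div_le_self (by positivity) (by linarith))
  · rw [(Phi_hasDerivAt h1 h2 hs).deriv, abs_of_nonneg (Phi_integrand_nonneg h1 hs), one_mul]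
    exact Phi_integrand_le1 h1 h2 hs
  · rintro (_ | n)
    · refine ⟨Phi_contDiffOn h1 h2, 1 / (2 * H - 1), one_div_pos.2 (by linarith), fun s hs => ?_⟩
      have := Phi_abs_le h1 h2 (by linarith : 0 < s) (r := 2 * H - 2) (by linarith)
        fun w hw => Phi_integrand_le2 h1 h2 hw
      rw [show 2 * H - 2 + 1 = 2 * H - 1 by ring] at this
      change |PhiFn H s| ≤ _
      rw [one_div_mul_eq_div]
      exact this
    · obtain ⟨g, hg, hgs⟩ := PhiIter_cls h1 h2 n
      refine ⟨hg.contDiffOn.congr fun s hs => hgs s hs, ?_⟩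
      obtain ⟨C, hC, hb⟩ := hg.bound
      refine ⟨C, hC, fun s hs => ?_⟩
      rw [hgs s (by linarith)]
      exact hb s hs
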